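/- arXiv:1005.3756 — 2 statements merged into one kernel-verified Lean document; each statement's English description precedes it below -/
import Mathlib

section
/- Let n ≥ 12 be even. Then there exist three (n−3)-cycles x, y, z in the alternating group A_n with xyz = 1 such that ⟨x, y⟩ = A_n. -/
/-!
A triple `x`, `y = x * t`, `z = (x * y)⁻¹` of cycles, each omitting `k` points, grows by two points
without changing `t`: if `x` sends `e` to `a`, let it send `e ↦ p ↦ q ↦ a` instead. Then `y` too has
`p, q` inserted before `a`, whereas `x * y` has `p` inserted before `a` and `q` before `x a`. All
three stay cycles, so one example on twelve points yields examples on every larger even number of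
points. That example is chosen so that `t ^ 7` is a `5`-cycle whose support meets its image under
`x ^ 4` in one point, which makes the commutator `⁅t ^ 7, x ^ 4 * t ^ 7 * x ^ (-4)⁆` a `3`-cycle. As
the group is primitive, it contains the alternating group by Jordan's theorem.
-/

open Equiv Equiv.Perm
open scoped Finset Pointwise commutatorElement

section Generation

theorem pow_apply_of_forall_ne {α β : Type*} {f : Perm α} {g : Perm β} {φ : β → α} {b : β}
    (h : ∀ j, g j ≠ b → f (φ j) = φ (g j)) {m : ℕ} {j : β} (hj : ∀ i < m, (g ^ (i + 1)) j ≠ b) :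
    (f ^ m) (φ j) = φ ((g ^ m) j) := by
  induction m with
  | zero => rfl
  | succ m ih =>
    have hm := hj m m.lt_succ_self
    rw [pow_succ', mul_apply] at hm
    rw [pow_succ', mul_apply, ih fun i hi => hj i (hi.trans m.lt_succ_self), h _ hm, pow_succ',
      mul_apply]

variable {α : Type*}

theorem isPretransitive_of_isCycle_mem {H : Subgroup (Perm α)} {x : Perm α} (hx : x ∈ H)
    (hxc : x.IsCycle) {a : α} (hfix : ∀ i, x i = i → ∃ g ∈ H, g a = i)
    (hmove : ∃ g ∈ H, x (g a) ≠ g a) : MulAction.IsPretransitive H α := by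
  refine (MulAction.isPretransitive_iff_base a).2 fun i => ?_
  by_cases hi : x i = i
  · obtain ⟨g, hg, hgi⟩ := hfix i hi
    exact ⟨⟨g, hg⟩, hgi⟩
  · obtain ⟨g, hg, hga⟩ := hmove
    obtain ⟨n, hn⟩ := hxc.exists_zpow_eq hga hi
    exact ⟨⟨x ^ n * g, mul_mem (zpow_mem hx n) hg⟩, hn⟩

theorem pow_smul_mem_of_isBlock {G : Type*} [Group G] [MulAction G α] {B : Set α}
    (hB : MulAction.IsBlock G B) {g : G} {a : α} (ha : a ∈ B) (hga : g • a ∈ B) (m : ℕ) :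
    g ^ m • a ∈ B := by
  have hpow : g ^ m • B = B :=
    pow_mem (MulAction.mem_stabilizer_iff.2 (hB.smul_eq_of_mem ha hga)) m
  exact hpow ▸ Set.smul_mem_smul_set ha

theorem mem_of_isBlock_of_isCycle_mem {H : Subgroup (Perm α)} {x : Perm α} (hx : x ∈ H)
    (hxc : x.IsCycle) {B : Set α} (hB : MulAction.IsBlock H B) {a i l : α} (ha : a ∈ B)
    (hxa : x a = a) (hi : i ∈ B) (hxi : x i ≠ i) (hxl : x l ≠ l) : l ∈ B := by
  obtain ⟨n, rfl⟩ := hxc.exists_zpow_eq hxi hxl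
  let g : H := ⟨x ^ n, zpow_mem hx n⟩
  have hga : g • a = a := zpow_apply_eq_self_of_apply_eq_self hxa n
  have hgB : g • B = B := hB.smul_eq_of_mem ha (hga.symm ▸ ha)
  exact hgB ▸ Set.smul_mem_smul_set hi

/-- The condition on `t` says that the points fixed by `x` form the start of a path of `t` of length
`2 * k` whose second half is moved by `x`: a block through `a` consisting of fixed points of `x` is
then invariant under some `t ^ j` with `0 < j < k`, which carries `a` into the second half. -/
theorem isPreprimitive_of_isCycle_mem {H : Subgroup (Perm α)} {x t : Perm α} (hx : x ∈ H)
    (ht : t ∈ H) (hxc : x.IsCycle) {a : α} {k : ℕ} (hk : 0 < k)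
    (hfix : ∀ i, x i = i → ∃ j < k, (t ^ j) a = i)
    (hpath : ∀ j < 2 * k, x ((t ^ j) a) = (t ^ j) a ↔ j < k) :
    MulAction.IsPreprimitive H α := by
  have : MulAction.IsPretransitive H α := by
    refine isPretransitive_of_isCycle_mem hx hxc (a := a) (fun i hi => ?_)
      ⟨t ^ k, pow_mem ht k, by simp [hpath k (by lia)]⟩
    obtain ⟨j, -, hj⟩ := hfix i hi
    exact ⟨t ^ j, pow_mem ht j, hj⟩
  refine MulAction.IsPreprimitive.of_isTrivialBlock_base a fun {B} haB hB => ?_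
  let power (j : ℕ) : H := ⟨t ^ j, pow_mem ht j⟩
  by_cases hBx : ∃ i ∈ B, x i ≠ i
  · obtain ⟨i, hiB, hi⟩ := hBx
    have moved_mem (l : α) (hl : x l ≠ l) : l ∈ B :=
      mem_of_isBlock_of_isCycle_mem hx hxc hB haB ((hpath 0 (by lia)).2 hk) hiB hi hl
    refine Or.inr (Set.eq_univ_of_forall fun l => ?_)
    by_cases hl : x l = l
    · obtain ⟨j, hj, rfl⟩ := hfix l hl
      have hkB : (t ^ k) a ∈ B := moved_mem _ (by simp [hpath k (by lia)])
      have hjkB : (t ^ j) ((t ^ k) a) ∈ B := by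
        rw [← mul_apply, ← pow_add]
        exact moved_mem _ (by simp [hpath (j + k) (by lia)])
      have hinv : power j • B = B := hB.smul_eq_of_mem hkB hjkB
      exact hinv ▸ Set.smul_mem_smul_set haB
    · exact moved_mem l hl
  · push Not at hBx
    refine Or.inl (Set.subsingleton_of_forall_eq a fun i hi => ?_)
    obtain ⟨j, hj, rfl⟩ := hfix i (hBx i hi)
    rcases j.eq_zero_or_pos with rfl | hj0
    · rfl
    have hmem (m : ℕ) : (t ^ (j * m)) a ∈ B := by
      rw [pow_mul]
      exact pow_smul_mem_of_isBlock hB (g := power j) haB hi m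
    have hlt : j * (k / j + 1) < 2 * k := by
      have := Nat.mul_div_le k j
      lia
    exact absurd ((hpath _ hlt).1 (hBx _ (hmem _))) (Nat.lt_mul_div_succ k hj0).not_gt

theorem closure_eq_top_of_le_closure_image {G : Type*} [Group G] {K : Subgroup G} {s : Set K}
    (h : K ≤ Subgroup.closure (K.subtype '' s)) : Subgroup.closure s = ⊤ := by
  rw [eq_top_iff, ← Subgroup.map_subtype_le_map_subtype, MonoidHom.map_closure]
  simpa [← MonoidHom.range_eq_map] using h

variable [DecidableEq α] [Fintype α]

theorem isThreeCycle_commutatorElement {f g : Perm α} {a : α}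
    (h : f.support ∩ g.support = {a}) : ⁅f, g⁆.IsThreeCycle := by
  have fixed_or_fixed (i : α) (hi : i ≠ a) : f i = i ∨ g i = i := by
    by_contra! hfg
    have : i ∈ f.support ∩ g.support := by simpa using hfg
    exact hi (by simpa [h] using this)
  obtain ⟨hfa, hga⟩ : f a ≠ a ∧ g a ≠ a := by
    simpa using h.ge (Finset.mem_singleton_self a)
  have hgfa : g (f a) = f a := (fixed_or_fixed _ hfa).resolve_left (by simpa using hfa)
  have hfga : f (g a) = g a := (fixed_or_fixed _ hga).resolve_right (by simpa using hga)
  have hne : g a ≠ f a := fun hgf => hga (g.injective (by rw [hgf, hgfa]))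
  suffices f * g = swap a (g a) * swap a (f a) * (g * f) by
    rw [commutatorElement_def, mul_assoc, ← mul_inv_rev, this, mul_inv_cancel_right]
    exact isThreeCycle_swap_mul_swap_same hga.symm hfa.symm hne
  ext i
  simp only [mul_apply]
  grind [f.injective.eq_iff, g.injective.eq_iff]

theorem mem_alternatingGroup_of_isCycle_of_odd {f : Perm α} (hf : f.IsCycle)
    (hodd : Odd #f.support) : f ∈ alternatingGroup α := by
  rw [mem_alternatingGroup, hf.sign, hodd.neg_one_pow, neg_neg]

end Generation

section Insertion

variable {α : Type*} [DecidableEq α]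

theorem swap_mul_apply_ne {f : Perm α} {p i : α} (a : α) (hp : f p = p) (hi : f i ≠ i) :
    (swap a p * f) i ≠ i := by
  rw [mul_apply]
  grind [f.injective.eq_iff]

theorem mul_insert_mul_insert {x : Perm α} (t : Perm α) {a p q : α} (hp : x p = p) (hq : x q = q)
    (ha : x a ≠ a) (hpq : p ≠ q) :
    (swap a q * (swap a p * x)) * ((swap a q * (swap a p * x)) * t) =
      swap (x a) q * (swap a p * (x * (x * t))) := by
  have hap : a ≠ p := by rintro rfl; exact ha hp
  have haq : a ≠ q := by rintro rfl; exact ha hq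
  ext i
  simp only [mul_apply]
  generalize t i = i
  grind [x.injective.eq_iff]

theorem exists_eq_formPerm_cons [Finite α] {f : Perm α} {a : α} (hf : f.IsCycle) (ha : f a ≠ a) :
    ∃ l : List α, (a :: l).Nodup ∧ f = (a :: l).formPerm := by
  have := Fintype.ofFinite α
  obtain ⟨b, l, hl⟩ : ∃ b l, f.toList a = b :: l :=
    List.exists_cons_of_ne_nil fun h => toList_eq_nil_iff.1 h (mem_support.2 ha)
  obtain rfl : b = a := by
    simpa [hl] using toList_getElem_zero f a (mem_support.2 ha)
  refine ⟨l, ?_, ?_⟩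
  · rw [← hl]
    exact nodup_toList f b
  · rw [← hl, formPerm_toList, hf.cycleOf_eq ha]

section ViaFintypeEmbedding

variable {β : Type*} [Fintype β] (φ : β ↪ α)

theorem viaFintypeEmbedding_mul (f g : Perm β) :
    (f * g).viaFintypeEmbedding φ = f.viaFintypeEmbedding φ * g.viaFintypeEmbedding φ :=
  (extendDomain_mul _ f g).symm

theorem viaFintypeEmbedding_pow (f : Perm β) (m : ℕ) :
    (f ^ m).viaFintypeEmbedding φ = f.viaFintypeEmbedding φ ^ m :=
  extendDomain_pow f _ m

theorem support_viaFintypeEmbedding [DecidableEq β] [Fintype α] (f : Perm β) :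
    (f.viaFintypeEmbedding φ).support = f.support.map φ :=
  support_extend_domain _

end ViaFintypeEmbedding

variable [Fintype α] {k : ℕ} {S : Finset α} {f : Perm α}

/-- `f` is a cycle on all but `k` points of `S`, and fixes every point outside `S`. -/
structure IsCycleOmitting (k : ℕ) (S : Finset α) (f : Perm α) : Prop where
  isCycle : f.IsCycle
  support_subset : f.support ⊆ S
  card_support_add : #f.support + k = #S

namespace IsCycleOmitting

theorem formPerm {l : List α} (hl : l.Nodup) (hlen : 2 ≤ l.length)
    (hcard : l.length + k = Fintype.card α) :
    IsCycleOmitting k .univ l.formPerm := by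
  refine ⟨List.isCycle_formPerm hl hlen, Finset.subset_univ _, ?_⟩
  rw [List.support_formPerm_of_nodup l hl (by rintro x rfl; simp at hlen),
    List.toFinset_card_of_nodup hl, hcard, Finset.card_univ]

theorem apply_eq_self {i : α} (hf : IsCycleOmitting k S f) (hi : i ∉ S) : f i = i :=
  notMem_support.1 fun h => hi (hf.support_subset h)

theorem apply_mem {i : α} (hf : IsCycleOmitting k S f) (hi : i ∈ S) : f i ∈ S := by
  by_contra h
  exact h (by rwa [f.injective (hf.apply_eq_self h)])

theorem apply_eq_self_iff {T : Finset α} (hf : IsCycleOmitting #T .univ f) (hT : ∀ i ∈ T, f i = i)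
    (i : α) : f i = i ↔ i ∈ T := by
  have hsub : T ⊆ f.supportᶜ := fun i hi => by simpa using hT i hi
  have hcard : #f.supportᶜ ≤ #T := by
    have := hf.card_support_add
    rw [Finset.card_compl, ← Finset.card_univ]
    lia
  rw [Finset.eq_of_subset_of_card_le hsub hcard]
  simp

theorem swap_mul {a p : α} (hf : IsCycleOmitting k S f) (ha : f a ≠ a) (hp : p ∉ S) :
    IsCycleOmitting k (insert p S) (swap a p * f) := by
  obtain ⟨l, hnodup, rfl⟩ := exists_eq_formPerm_cons hf.isCycle ha
  have hl : l ≠ [] := by rintro rfl; simp at ha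
  have hsupp : (a :: l).formPerm.support = (a :: l).toFinset :=
    List.support_formPerm_of_nodup _ hnodup (by simp [hl])
  have hpl : p ∉ a :: l := fun h => hp (hf.support_subset (by rwa [hsupp, List.mem_toFinset]))
  have hnodup' : (p :: a :: l).Nodup := List.nodup_cons.2 ⟨hpl, hnodup⟩
  have hsupp' : (p :: a :: l).formPerm.support = insert p (a :: l).formPerm.support := by
    rw [List.support_formPerm_of_nodup _ hnodup' (by simp), hsupp, List.toFinset_cons]
  rw [swap_comm, ← List.formPerm_cons_cons]
  refine ⟨List.isCycle_formPerm hnodup' (by simp), ?_, ?_⟩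
  · rw [hsupp']
    exact Finset.insert_subset_insert p hf.support_subset
  · rw [hsupp', Finset.card_insert_of_notMem (mt (@hf.support_subset p) hp),
      Finset.card_insert_of_notMem hp, ← hf.card_support_add]
    lia

theorem viaFintypeEmbedding {β : Type*} [DecidableEq β] [Fintype β] (hf : IsCycleOmitting k S f)
    (φ : α ↪ β) : IsCycleOmitting k (S.map φ) (f.viaFintypeEmbedding φ) := by
  refine ⟨hf.isCycle.extendDomain _, ?_, ?_⟩
  · simpa [support_viaFintypeEmbedding] using hf.support_subset
  · simpa [support_viaFintypeEmbedding] using hf.card_support_add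

end IsCycleOmitting

/-- The permutations `x`, `x * t` and `x * (x * t)` are cycles omitting `k` points of `S`, and two
new points can be inserted into each of them by redirecting, in `x`, the arrow into `a`. -/
structure IsExtensible (k : ℕ) (S : Finset α) (x t : Perm α) (a : α) : Prop where
  left : IsCycleOmitting k S x
  mul : IsCycleOmitting k S (x * t)
  mul_mul : IsCycleOmitting k S (x * (x * t))
  left_apply_ne : x a ≠ a
  mul_apply_ne : (x * t) a ≠ a
  mul_mul_apply_ne : (x * (x * t)) a ≠ a
  mul_mul_apply_apply_ne : (x * (x * t)) (x a) ≠ x a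

namespace IsExtensible

variable {x t : Perm α} {a : α}

theorem insert_insert_apply {p q i : α} (h : IsExtensible k S x t a) (hp : p ∉ S) (hq : q ∉ S)
    (hi : i ∈ S) (hia : x i ≠ a) : (swap a q * (swap a p * x)) i = x i := by
  have hxi : x i ∈ S := h.left.apply_mem hi
  simp only [mul_apply, swap_apply_of_ne_of_ne hia (ne_of_mem_of_not_mem hxi hp),
    swap_apply_of_ne_of_ne hia (ne_of_mem_of_not_mem hxi hq)]

theorem insert_insert {p q : α} (h : IsExtensible k S x t a) (hp : p ∉ S) (hq : q ∉ S)
    (hpq : p ≠ q) :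
    IsExtensible k (insert q (insert p S)) (swap a q * (swap a p * x)) t a := by
  have hq' : q ∉ insert p S := by simp [hpq.symm, hq]
  have hxa := h.insert_insert_apply hp hq
    (h.left.support_subset (mem_support.2 h.left_apply_ne)) h.left_apply_ne
  have hmul : swap a q * (swap a p * x) * t = swap a q * (swap a p * (x * t)) := by
    simp only [mul_assoc]
  have hmul_mul := mul_insert_mul_insert t (h.left.apply_eq_self hp) (h.left.apply_eq_self hq)
    h.left_apply_ne hpq
  have ne_p {f : Perm α} {i : α} (hf : IsCycleOmitting k S f) (hi : f i ≠ i) :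
      (swap a p * f) i ≠ i := swap_mul_apply_ne a (hf.apply_eq_self hp) hi
  have hx := h.left.swap_mul h.left_apply_ne hp
  have hy := h.mul.swap_mul h.mul_apply_ne hp
  have hz := h.mul_mul.swap_mul h.mul_mul_apply_ne hp
  have hxne := ne_p h.left h.left_apply_ne
  have hyne := ne_p h.mul h.mul_apply_ne
  have hzne := ne_p h.mul_mul h.mul_mul_apply_ne
  have hzne' := ne_p h.mul_mul h.mul_mul_apply_apply_ne
  constructor
  · exact hx.swap_mul hxne hq'
  · exact hmul ▸ hy.swap_mul hyne hq'
  · exact hmul_mul ▸ hz.swap_mul hzne' hq'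
  · exact swap_mul_apply_ne a (hx.apply_eq_self hq') hxne
  · exact hmul ▸ swap_mul_apply_ne a (hy.apply_eq_self hq') hyne
  · exact hmul_mul ▸ swap_mul_apply_ne (x a) (hz.apply_eq_self hq') hzne
  · rw [hmul_mul, hxa]
    exact swap_mul_apply_ne (x a) (hz.apply_eq_self hq') hzne'

theorem exists_extension {T : Finset α} (h : IsExtensible k S x t a) (hST : S ⊆ T)
    (heven : Even #(T \ S)) :
    ∃ x', IsExtensible k T x' t a ∧ ∀ i ∈ S, x i ≠ a → x' i = x i := by
  obtain ⟨m, hm⟩ := heven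
  induction m generalizing S x with
  | zero =>
    obtain rfl : S = T := hST.antisymm (Finset.sdiff_eq_empty_iff_subset.1 (by simpa using hm))
    exact ⟨x, h, fun _ _ _ => rfl⟩
  | succ m ih =>
    obtain ⟨p, hp, q, hq, hpq⟩ := Finset.one_lt_card.1 (by lia : 1 < #(T \ S))
    rw [Finset.mem_sdiff] at hp hq
    have hsub : insert q (insert p S) ⊆ T := by
      simp [Finset.insert_subset_iff, hp.1, hq.1, hST]
    have hcard : #(T \ insert q (insert p S)) = m + m := by
      have hinsert : #(insert q (insert p S)) = #S + 2 := by
        rw [Finset.card_insert_of_notMem (by simp [hpq.symm, hq.2]),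
          Finset.card_insert_of_notMem hp.2]
      rw [Finset.card_sdiff_of_subset hST] at hm
      rw [Finset.card_sdiff_of_subset hsub]
      lia
    obtain ⟨x', hx', hagree⟩ := ih (h.insert_insert hp.2 hq.2 hpq) hsub hcard
    refine ⟨x', hx', fun i hi hia => ?_⟩
    have hxi := h.insert_insert_apply hp.2 hq.2 hi hia
    rw [hagree i (by simp [hi]) (by rwa [hxi]), hxi]

theorem viaFintypeEmbedding {β : Type*} [DecidableEq β] [Fintype β] (h : IsExtensible k S x t a)
    (φ : α ↪ β) :
    IsExtensible k (S.map φ) (x.viaFintypeEmbedding φ) (t.viaFintypeEmbedding φ) (φ a) := by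
  constructor
  all_goals try simp only [← viaFintypeEmbedding_mul, viaFintypeEmbedding_apply_image]
  · exact h.left.viaFintypeEmbedding φ
  · exact h.mul.viaFintypeEmbedding φ
  · exact h.mul_mul.viaFintypeEmbedding φ
  · exact φ.injective.ne h.left_apply_ne
  · exact φ.injective.ne h.mul_apply_ne
  · exact φ.injective.ne h.mul_mul_apply_ne
  · exact φ.injective.ne h.mul_mul_apply_apply_ne

end IsExtensible

end Insertion

section Example

/-- The cycle on twelve points, three of them fixed, from which all others are grown. -/
def baseCycle : Perm (Fin 12) := c[3, 4, 5, 6, 7, 8, 9, 10, 11]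

/-- The quotient `x⁻¹ * y` of the generators `x = baseCycle` and `y`. It stays the same when points
are inserted. -/
def baseQuotient : Perm (Fin 12) := c[0, 1, 2, 11, 10, 9, 8] * c[3, 6, 4, 7, 5]

theorem isExtensible_baseCycle : IsExtensible 3 .univ baseCycle baseQuotient 3 where
  left := IsCycleOmitting.formPerm (by decide) (by decide) (by decide)
  mul := by
    have : baseCycle * baseQuotient = c[0, 1, 2, 3, 7, 6, 5, 4, 8] := by decide
    rw [this]
    exact IsCycleOmitting.formPerm (by decide) (by decide) (by decide)
  mul_mul := by
    have : baseCycle * (baseCycle * baseQuotient) = c[0, 1, 2, 4, 9, 10, 11, 3, 8] := by decide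
    rw [this]
    exact IsCycleOmitting.formPerm (by decide) (by decide) (by decide)
  left_apply_ne := by decide
  mul_apply_ne := by decide
  mul_mul_apply_ne := by decide
  mul_mul_apply_apply_ne := by decide +kernel

theorem support_baseQuotient_pow : (baseQuotient ^ 7).support = {3, 4, 5, 6, 7} := by
  decide +kernel

variable {α : Type*} [DecidableEq α] [Fintype α] {φ : Fin 12 ↪ α} {x : Perm α}

theorem exists_isExtensible_univ (φ : Fin 12 ↪ α) (heven : Even (Fintype.card α)) :
    ∃ x : Perm α, IsExtensible 3 .univ x (baseQuotient.viaFintypeEmbedding φ) (φ 3) ∧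
      ∀ j, baseCycle j ≠ 3 → x (φ j) = φ (baseCycle j) := by
  have hcard : Even #(.univ \ Finset.univ.map φ) := by
    rw [Finset.card_univ_sdiff, Finset.card_map, Finset.card_univ, Fintype.card_fin]
    exact heven.tsub (by decide)
  obtain ⟨x, hx, hagree⟩ := (isExtensible_baseCycle.viaFintypeEmbedding φ).exists_extension
    (Finset.subset_univ _) hcard
  refine ⟨x, hx, fun j hj => ?_⟩
  rw [hagree _ (by simp) (by simpa using hj), viaFintypeEmbedding_apply_image]

theorem isThreeCycle_commutatorElement_baseQuotient_pow
    (hagree : ∀ j, baseCycle j ≠ 3 → x (φ j) = φ (baseCycle j)) :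
    ⁅baseQuotient.viaFintypeEmbedding φ ^ 7,
      x ^ 4 * baseQuotient.viaFintypeEmbedding φ ^ 7 * (x ^ 4)⁻¹⁆.IsThreeCycle := by
  have hsupp : (baseQuotient.viaFintypeEmbedding φ ^ 7).support =
      Finset.map φ {3, 4, 5, 6, 7} := by
    rw [← viaFintypeEmbedding_pow, support_viaFintypeEmbedding, support_baseQuotient_pow]
  have hpow : ∀ j ∈ ({3, 4, 5, 6, 7} : Finset (Fin 12)), (x ^ 4) (φ j) = φ (j + 4) := by
    intro j hj
    have hj3 : ∀ i < 4, (baseCycle ^ (i + 1)) j ≠ 3 := by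
      revert j; decide
    have : (baseCycle ^ 4) j = j + 4 := by
      revert j; decide
    rw [pow_apply_of_forall_ne hagree hj3, this]
  have hconj : (x ^ 4 * baseQuotient.viaFintypeEmbedding φ ^ 7 * (x ^ 4)⁻¹).support =
      Finset.map φ {7, 8, 9, 10, 11} := by
    calc
      _ = Finset.image ⇑(x ^ 4) (Finset.image φ {3, 4, 5, 6, 7}) := by
        rw [support_conj, hsupp, Finset.map_eq_image, Finset.map_eq_image, coe_toEmbedding]
      _ = Finset.image (fun j => φ (j + 4)) {3, 4, 5, 6, 7} := by
        rw [Finset.image_image]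
        exact Finset.image_congr hpow
      _ = Finset.map φ {7, 8, 9, 10, 11} := by
        rw [Finset.map_eq_image]
        rfl
  refine isThreeCycle_commutatorElement (a := φ 7) ?_
  rw [hsupp, hconj, ← Finset.map_inter]
  rfl

theorem isPreprimitive_of_baseQuotient_mem {H : Subgroup (Perm α)} (hx : x ∈ H)
    (ht : baseQuotient.viaFintypeEmbedding φ ∈ H) (hcycle : IsCycleOmitting 3 .univ x)
    (hagree : ∀ j, baseCycle j ≠ 3 → x (φ j) = φ (baseCycle j)) :
    MulAction.IsPreprimitive H α := by
  have pow_apply (j : ℕ) :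
      (baseQuotient.viaFintypeEmbedding φ ^ j) (φ 0) = φ ((baseQuotient ^ j) 0) := by
    rw [← viaFintypeEmbedding_pow, viaFintypeEmbedding_apply_image]
  have hfix (i : α) : x i = i ↔ i ∈ Finset.map φ {0, 1, 2} := by
    refine IsCycleOmitting.apply_eq_self_iff (by simpa using hcycle) ?_ i
    have hbase : ∀ j ∈ ({0, 1, 2} : Finset (Fin 12)), baseCycle j = j ∧ j ≠ 3 := by decide
    intro i hi
    obtain ⟨j, hj, rfl⟩ := Finset.mem_map.1 hi
    obtain ⟨hfixed, hj3⟩ := hbase j hj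
    rw [hagree j (by rwa [hfixed]), hfixed]
  have exists_pow : ∀ l ∈ ({0, 1, 2} : Finset (Fin 12)), ∃ j < 3, (baseQuotient ^ j) 0 = l := by
    decide
  have pow_mem_iff : ∀ j < 2 * 3, (baseQuotient ^ j) 0 ∈ ({0, 1, 2} : Finset (Fin 12)) ↔ j < 3 := by
    decide +kernel
  refine isPreprimitive_of_isCycle_mem hx ht hcycle.isCycle (a := φ 0) (k := 3) (by simp) ?_ ?_
  · intro i hi
    obtain ⟨l, hl, rfl⟩ := Finset.mem_map.1 ((hfix i).1 hi)
    obtain ⟨j, hj, rfl⟩ := exists_pow l hl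
    exact ⟨j, hj, pow_apply j⟩
  · simpa only [pow_apply, hfix, Finset.mem_map'] using pow_mem_iff

theorem alternatingGroup_le_of_baseQuotient_mem {H : Subgroup (Perm α)} (hx : x ∈ H)
    (ht : baseQuotient.viaFintypeEmbedding φ ∈ H) (hcycle : IsCycleOmitting 3 .univ x)
    (hagree : ∀ j, baseCycle j ≠ 3 → x (φ j) = φ (baseCycle j)) : alternatingGroup α ≤ H := by
  have hpow := pow_mem ht 7
  have hpow' := pow_mem hx 4
  have hconj := mul_mem (mul_mem hpow' hpow) (inv_mem hpow')
  have hcomm := mul_mem (mul_mem (mul_mem hpow hconj) (inv_mem hpow)) (inv_mem hconj)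
  exact alternatingGroup_le_of_isPreprimitive_of_isThreeCycle_mem
    (isPreprimitive_of_baseQuotient_mem hx ht hcycle hagree)
    (isThreeCycle_commutatorElement_baseQuotient_pow hagree) hcomm

end Example

theorem stmt_5_general {α : Type*} [DecidableEq α] [Fintype α] (hcard : 12 ≤ Fintype.card α)
    (heven : Even (Fintype.card α)) :
    ∃ x y z : alternatingGroup α,
      (x : Perm α).IsCycle ∧ #(x : Perm α).support = Fintype.card α - 3 ∧
      (y : Perm α).IsCycle ∧ #(y : Perm α).support = Fintype.card α - 3 ∧
      (z : Perm α).IsCycle ∧ #(z : Perm α).support = Fintype.card α - 3 ∧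
      x * y * z = 1 ∧ Subgroup.closure {x, y} = (⊤ : Subgroup (alternatingGroup α)) := by
  obtain ⟨φ⟩ : Nonempty (Fin 12 ↪ α) := Function.Embedding.nonempty_of_card_le (by simpa)
  obtain ⟨x, h, hagree⟩ := exists_isExtensible_univ φ heven
  set t := baseQuotient.viaFintypeEmbedding φ
  have card_support {f : Perm α} (hf : IsCycleOmitting 3 .univ f) :
      #f.support = Fintype.card α - 3 := Nat.eq_sub_of_add_eq hf.card_support_add
  have mem_alternating {f : Perm α} (hf : IsCycleOmitting 3 .univ f) : f ∈ alternatingGroup α :=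
    mem_alternatingGroup_of_isCycle_of_odd hf.isCycle
      (card_support hf ▸ Nat.Even.sub_odd (by lia) heven (by decide))
  refine ⟨⟨x, mem_alternating h.left⟩, ⟨x * t, mem_alternating h.mul⟩,
    ⟨x * (x * t), mem_alternating h.mul_mul⟩⁻¹, h.left.isCycle, card_support h.left,
    h.mul.isCycle, card_support h.mul, h.mul_mul.isCycle.inv, ?_, mul_inv_cancel _,
    closure_eq_top_of_le_closure_image ?_⟩
  · simpa only [InvMemClass.coe_inv, support_inv] using card_support h.mul_mul
  · rw [Set.image_pair]
    have hx : x ∈ Subgroup.closure {x, x * t} := Subgroup.subset_closure (by simp)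
    have hxt : x * t ∈ Subgroup.closure {x, x * t} := Subgroup.subset_closure (by simp)
    exact alternatingGroup_le_of_baseQuotient_mem hx ((mul_mem_cancel_left hx).1 hxt) h.left hagree

/-- For even `n ≥ 12` there exist three `(n-3)`-cycles in `A_n` with product `1`
which generate `A_n`. -/
theorem stmt_5 (n : ℕ) (hn : 12 ≤ n) (hodd : Even n) :
    ∃ x y z : alternatingGroup (Fin n),
      (x : Equiv.Perm (Fin n)).IsCycle ∧ (x : Equiv.Perm (Fin n)).support.card = n - 3 ∧
      (y : Equiv.Perm (Fin n)).IsCycle ∧ (y : Equiv.Perm (Fin n)).support.card = n - 3 ∧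
      (z : Equiv.Perm (Fin n)).IsCycle ∧ (z : Equiv.Perm (Fin n)).support.card = n - 3 ∧
      x * y * z = 1 ∧ Subgroup.closure {x, y} = (⊤ : Subgroup (alternatingGroup (Fin n))) := by
  simpa only [Fintype.card_fin] using stmt_5_general (α := Fin n) (by simpa) (by simpa)
end

section
/- Let G = SL_2(q) with q > 3 even, and let x ∈ G have order q+1. Let k be an algebraically closed field of characteristic 2 and V a nontrivial irreducible kG-module. Then x has pairwise distinct eigenvalues on V; in particular the fixed space C_V(x) is zero. -/
/-!
Write `C = ⟨x⟩`. Since `x` has no eigenvalue in `F`, every element of `G` becomes trace-free after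
multiplication by some element of the centralizer of `x`, which is `C`. In characteristic two the
trace-free elements of `SL₂` square to `1`, so every `g` satisfies `g⁻¹ = c g c` for some `c ∈ C`.

Some involution `h` inverts `x`. Then `g ↦ h g⁻¹ h⁻¹` is an antiautomorphism that fixes `x` and maps
every element into its `C`-conjugacy class. By Gelfand's trick the operators `E g E`, with `E` the
projection onto an eigenspace of `x`, commute; as they act irreducibly on the image of `E`, that
image is at most one-dimensional.

If `x` fixes `v ≠ 0`, choose a functional `ψ` that is invariant under `C` with `ψ v ≠ 0`. Its matrix
coefficient `f g = ψ (g v)` satisfies `f g⁻¹ = f g`, so `(g, h) ↦ f (g⁻¹ h)` is a symmetric bilinear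
form on the group algebra. In characteristic two the value of a symmetric form at `(a, a)` is
additive in `a`, hence is `(∑ a_g)² ψ v`. So `a v = 0` forces `∑ a_g = 0`, the augmentation
descends to a nonzero invariant functional on `V`, and `V` is trivial.
-/

open Matrix Module
open scoped MatrixGroups LinearAlgebra.Projectivization

section Irreducible

variable {G k V : Type*} [Monoid G] [Field k] [AddCommGroup V] [Module k V]
  (ρ : Representation k G V)

theorem isIrreducible_of_forall_invariant_submodule [Nontrivial V]
    (h : ∀ W : Submodule k V, (∀ g, ∀ v ∈ W, ρ g v ∈ W) → W = ⊥ ∨ W = ⊤) :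
    ρ.IsIrreducible where
  exists_pair_ne := ⟨⊥, ⊤, fun e ↦ bot_ne_top (α := Submodule k V)
    (congrArg Subrepresentation.toSubmodule e)⟩
  eq_bot_or_eq_top W :=
    (h W.toSubmodule fun g _ hv ↦ W.apply_mem_toSubmodule g hv).imp
      (fun e ↦ Subrepresentation.toSubmodule_injective e)
      (fun e ↦ Subrepresentation.toSubmodule_injective e)

variable [ρ.IsIrreducible]

theorem eq_top_of_invariant_of_mem_of_ne_zero {W : Submodule k V}
    (hW : ∀ g, ∀ v ∈ W, ρ g v ∈ W) {v : V} (hv : v ∈ W) (hv0 : v ≠ 0) : W = ⊤ :=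
  Or.elim (eq_bot_or_eq_top (⟨W, fun g _ ↦ hW g _⟩ : Subrepresentation ρ))
    (fun e ↦ absurd (congrArg Subrepresentation.toSubmodule e : W = ⊥)
      ((Submodule.ne_bot_iff W).mpr ⟨v, hv, hv0⟩))
    (congrArg Subrepresentation.toSubmodule)

theorem span_range_apply_eq_top {v : V} (hv : v ≠ 0) :
    Submodule.span k (Set.range fun g ↦ ρ g v) = ⊤ := by
  refine eq_top_of_invariant_of_mem_of_ne_zero ρ (fun g w hw ↦ ?_)
    (Submodule.subset_span ⟨1, by simp⟩) hv
  suffices Submodule.span k (Set.range fun g ↦ ρ g v) ≤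
      (Submodule.span k (Set.range fun g ↦ ρ g v)).comap (ρ g) from this hw
  rw [Submodule.span_le]
  rintro _ ⟨h, rfl⟩
  exact Submodule.subset_span ⟨g * h, by simp⟩

end Irreducible

section EigenAverage

variable {G k V : Type*} [Group G] [Field k] [AddCommGroup V] [Module k V]
  (ρ : Representation k G V) {x : G} {θ : k}

theorem ne_zero_of_mem_eigenspace {v : V} (hv : v ∈ End.eigenspace (ρ x) θ) (hv0 : v ≠ 0) :
    θ ≠ 0 := by
  rintro rfl
  refine hv0 ((ρ.apply_bijective x).injective ?_)
  rw [End.mem_eigenspace_iff.mp hv, zero_smul, map_zero]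

theorem pow_orderOf_eq_one_of_mem_eigenspace {v : V} (hv : v ∈ End.eigenspace (ρ x) θ)
    (hv0 : v ≠ 0) : θ ^ orderOf x = 1 := by
  have hpow := (End.hasEigenvector_iff.mpr ⟨hv, hv0⟩).pow_apply (orderOf x)
  rw [← map_pow, pow_orderOf_eq_one, map_one, End.one_apply] at hpow
  exact smul_left_injective k hv0 (by simpa using hpow.symm)

variable (x θ) in
/-- The sum of the powers of `θ⁻¹ • ρ x` over one period: the unnormalised projection onto the
`θ`-eigenspace of `ρ x`, meaningful only when `θ ^ orderOf x = 1` and `orderOf x ≠ 0` in `k`. -/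
noncomputable def eigenAverage : End k V := ∑ i ∈ Finset.range (orderOf x), (θ⁻¹ • ρ x) ^ i

theorem smul_map_pow_orderOf (hθ : θ ^ orderOf x = 1) : (θ⁻¹ • ρ x) ^ orderOf x = 1 := by
  rw [smul_pow, inv_pow, hθ, inv_one, one_smul, ← map_pow, pow_orderOf_eq_one, map_one]

theorem smul_map_pow_mul_eigenAverage (hθ : θ ^ orderOf x = 1) (i : ℕ) :
    (θ⁻¹ • ρ x) ^ i * eigenAverage ρ x θ = eigenAverage ρ x θ := by
  have hfix : (θ⁻¹ • ρ x) * eigenAverage ρ x θ = eigenAverage ρ x θ := by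
    rw [← sub_eq_zero, ← sub_one_mul, eigenAverage, mul_geom_sum, smul_map_pow_orderOf ρ hθ,
      sub_self]
  induction i with
  | zero => rw [pow_zero, one_mul]
  | succ i ih => rw [pow_succ, mul_assoc, hfix, ih]

theorem eigenAverage_mul_smul_map_pow (hθ : θ ^ orderOf x = 1) (i : ℕ) :
    eigenAverage ρ x θ * (θ⁻¹ • ρ x) ^ i = eigenAverage ρ x θ := by
  have hfix : eigenAverage ρ x θ * (θ⁻¹ • ρ x) = eigenAverage ρ x θ := by
    rw [← sub_eq_zero, ← mul_sub_one, eigenAverage, geom_sum_mul, smul_map_pow_orderOf ρ hθ,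
      sub_self]
  induction i with
  | zero => rw [pow_zero, mul_one]
  | succ i ih => rw [pow_succ', ← mul_assoc, hfix, ih]

theorem eigenAverage_apply_of_mem_eigenspace {v : V}
    (hv : v ∈ End.eigenspace (ρ x) θ) : eigenAverage ρ x θ v = (orderOf x : k) • v := by
  rcases eq_or_ne v 0 with rfl | hv0
  · rw [map_zero, smul_zero]
  have hfix : (θ⁻¹ • ρ x) v = v := by
    rw [LinearMap.smul_apply, End.mem_eigenspace_iff.mp hv,
      inv_smul_smul₀ (ne_zero_of_mem_eigenspace ρ hv hv0)]
  have hpow (i : ℕ) : ((θ⁻¹ • ρ x) ^ i) v = v := by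
    rw [End.pow_apply, Function.iterate_fixed hfix]
  simp only [eigenAverage, LinearMap.sum_apply, hpow, Finset.sum_const, Finset.card_range,
    Nat.cast_smul_eq_nsmul]

theorem eigenAverage_apply_mem_eigenspace (hθ : θ ^ orderOf x = 1) (hθ0 : θ ≠ 0) (v : V) :
    eigenAverage ρ x θ v ∈ End.eigenspace (ρ x) θ := by
  have hfix := LinearMap.congr_fun (smul_map_pow_mul_eigenAverage ρ hθ 1) v
  rw [pow_one, End.mul_apply, LinearMap.smul_apply, inv_smul_eq_iff₀ hθ0] at hfix
  exact End.mem_eigenspace_iff.mpr hfix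

end EigenAverage

section GelfandTrick

variable {G k V : Type*} [Group G] [Field k] [AddCommGroup V] [Module k V]
  (ρ : Representation k G V) {x : G} {θ : k}

theorem eigenAverage_mul_map_mul_eigenAverage_congr (hθ : θ ^ orderOf x = 1) {g g' : G} {i : ℕ}
    (h : SemiconjBy (x ^ i) g g') :
    eigenAverage ρ x θ * ρ g * eigenAverage ρ x θ =
      eigenAverage ρ x θ * ρ g' * eigenAverage ρ x θ := by
  have hS : (θ⁻¹ • ρ x) ^ i * ρ g = ρ g' * (θ⁻¹ • ρ x) ^ i := by
    rw [smul_pow, ← map_pow, smul_mul_assoc, mul_smul_comm, ← map_mul, ← map_mul, h.eq]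
  set E := eigenAverage ρ x θ
  calc E * ρ g * E = E * ((θ⁻¹ • ρ x) ^ i * ρ g) * E := by
        rw [← mul_assoc, eigenAverage_mul_smul_map_pow ρ hθ]
    _ = E * ρ g' * ((θ⁻¹ • ρ x) ^ i * E) := by rw [hS]; simp only [mul_assoc]
    _ = E * ρ g' * E := by rw [smul_map_pow_mul_eigenAverage ρ hθ]

theorem eigenAverage_commute_of_antiautomorphism (hθ : θ ^ orderOf x = 1) (σ : G →* Gᵐᵒᵖ)
    (hσx : σ x = .op x) (hσ : ∀ g, ∃ i : ℕ, SemiconjBy (x ^ i) (σ g).unop g) (g h : G) :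
    eigenAverage ρ x θ * ρ g * eigenAverage ρ x θ * ρ h * eigenAverage ρ x θ =
      eigenAverage ρ x θ * ρ h * eigenAverage ρ x θ * ρ g * eigenAverage ρ x θ := by
  set E := eigenAverage ρ x θ with hE
  have hEσE (g : G) : E * ρ (σ g).unop * E = E * ρ g * E :=
    let ⟨_, hi⟩ := hσ g
    eigenAverage_mul_map_mul_eigenAverage_congr ρ hθ hi
  have hterm (i : ℕ) : E * ρ g * (θ⁻¹ • ρ x) ^ i * ρ h * E =
      E * ρ (σ h).unop * (θ⁻¹ • ρ x) ^ i * ρ (σ g).unop * E := by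
    have hword := hEσE (g * x ^ i * h)
    simp only [map_mul, map_pow, hσx, MulOpposite.unop_mul, MulOpposite.unop_pow,
      MulOpposite.unop_op, mul_assoc] at hword
    simp only [smul_pow, mul_smul_comm, smul_mul_assoc, mul_assoc, hword]
  calc E * ρ g * E * ρ h * E = E * ρ (σ h).unop * E * ρ (σ g).unop * E := by
        conv_lhs => enter [1, 1, 2]; rw [hE, eigenAverage]
        conv_rhs => enter [1, 1, 2]; rw [hE, eigenAverage]
        simp only [Finset.mul_sum, Finset.sum_mul, hterm]
    _ = E * ρ h * (E * ρ (σ g).unop * E) := by rw [hEσE]; simp only [mul_assoc]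
    _ = E * ρ h * E * ρ g * E := by rw [hEσE]; simp only [mul_assoc]

theorem mem_span_range_eigenAverage_apply [ρ.IsIrreducible] (hn : (orderOf x : k) ≠ 0)
    {u w : V} (hu : u ≠ 0) (hw : w ∈ End.eigenspace (ρ x) θ) :
    w ∈ Submodule.span k (Set.range fun g ↦ eigenAverage ρ x θ (ρ g u)) := by
  have hEw : eigenAverage ρ x θ w ∈
      (Submodule.span k (Set.range fun g ↦ ρ g u)).map (eigenAverage ρ x θ) :=
    Submodule.mem_map_of_mem (span_range_apply_eq_top ρ hu ▸ Submodule.mem_top)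
  rw [eigenAverage_apply_of_mem_eigenspace ρ hw, Submodule.map_span, ← Set.range_comp] at hEw
  exact (Submodule.smul_mem_iff _ hn).mp hEw

theorem exists_eigenAverage_apply_eq_smul [IsAlgClosed k] [FiniteDimensional k V]
    [ρ.IsIrreducible] (hn : (orderOf x : k) ≠ 0)
    (hcomm : ∀ g h : G,
      eigenAverage ρ x θ * ρ g * eigenAverage ρ x θ * ρ h * eigenAverage ρ x θ =
        eigenAverage ρ x θ * ρ h * eigenAverage ρ x θ * ρ g * eigenAverage ρ x θ)
    (hW : End.eigenspace (ρ x) θ ≠ ⊥) (g : G) :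
    ∃ c : k, ∀ w ∈ End.eigenspace (ρ x) θ, eigenAverage ρ x θ (ρ g w) = c • w := by
  set E := eigenAverage ρ x θ
  obtain ⟨v, hv, hv0⟩ := (Submodule.ne_bot_iff _).mp hW
  have : Nontrivial (End.eigenspace (ρ x) θ) := Submodule.nontrivial_iff_ne_bot.mpr hW
  have hmaps (w : V) (_ : w ∈ End.eigenspace (ρ x) θ) : (E * ρ g) w ∈ End.eigenspace (ρ x) θ :=
    eigenAverage_apply_mem_eigenspace ρ (pow_orderOf_eq_one_of_mem_eigenspace ρ hv hv0)
      (ne_zero_of_mem_eigenspace ρ hv hv0) _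
  obtain ⟨c, hc⟩ := End.exists_eigenvalue ((E * ρ g).restrict hmaps)
  obtain ⟨⟨u, huW⟩, hu⟩ := hc.exists_hasEigenvector
  have hu0 : u ≠ 0 := fun h ↦ hu.2 (Subtype.ext h)
  have hEgu : E (ρ g u) = c • u := congrArg Subtype.val hu.apply_eq_smul
  have hEu : E u = (orderOf x : k) • u := eigenAverage_apply_of_mem_eigenspace ρ huW
  suffices End.eigenspace (ρ x) θ ≤ End.eigenspace (E * ρ g) c from
    ⟨c, fun w hw ↦ End.mem_eigenspace_iff.mp (this hw)⟩
  intro w hw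
  refine Submodule.span_le.mpr ?_ (mem_span_range_eigenAverage_apply ρ hn hu0 hw)
  rintro _ ⟨h, rfl⟩
  have hswap := LinearMap.congr_fun (hcomm g h) u
  simp only [End.mul_apply, hEu, map_smul, hEgu] at hswap
  refine End.mem_eigenspace_iff.mpr (smul_right_injective V hn ?_)
  simpa only [End.mul_apply, smul_comm _ c] using hswap

theorem finrank_eigenspace_le_one_of_antiautomorphism [IsAlgClosed k] [FiniteDimensional k V]
    [ρ.IsIrreducible] (hn : (orderOf x : k) ≠ 0) (σ : G →* Gᵐᵒᵖ)
    (hσx : σ x = .op x) (hσ : ∀ g, ∃ i : ℕ, SemiconjBy (x ^ i) (σ g).unop g) (θ : k) :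
    finrank k (End.eigenspace (ρ x) θ) ≤ 1 := by
  by_cases hW : End.eigenspace (ρ x) θ = ⊥
  · exact hW ▸ finrank_bot k V ▸ zero_le_one
  obtain ⟨u, hu, hu0⟩ := (Submodule.ne_bot_iff _).mp hW
  have hθ := pow_orderOf_eq_one_of_mem_eigenspace ρ hu hu0
  have hscalar := exists_eigenAverage_apply_eq_smul ρ hn
    (eigenAverage_commute_of_antiautomorphism ρ hθ σ hσx hσ) hW
  have hle : End.eigenspace (ρ x) θ ≤ k ∙ u := fun w hw ↦ by
    refine Submodule.span_le.mpr ?_ (mem_span_range_eigenAverage_apply ρ hn hu0 hw)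
    rintro _ ⟨g, rfl⟩
    obtain ⟨c, hc⟩ := hscalar g
    exact Submodule.mem_span_singleton.mpr ⟨c, (hc u hu).symm⟩
  exact (Submodule.finrank_mono hle).trans (finrank_span_singleton hu0).le

end GelfandTrick

section SymmetricMatrixCoefficient

variable {G k V : Type*} [Group G] [Field k] [AddCommGroup V] [Module k V]
  (ρ : Representation k G V) (v : V) (ψ : Dual k V)

/-- The bilinear form on the group algebra, with its elements as finitely supported functions, that
sends the basis vectors `g, h` to the matrix coefficient `ψ (ρ (g⁻¹ * h) v)`. Elements that
annihilate `v` lie in its right kernel. -/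
noncomputable def orbitForm : LinearMap.BilinForm k (G →₀ k) :=
  Finsupp.linearCombination k fun g ↦
    ψ ∘ₗ ρ g⁻¹ ∘ₗ Finsupp.linearCombination k fun h ↦ ρ h v

theorem orbitForm_single_single (g h : G) (a b : k) :
    orbitForm ρ v ψ (.single g a) (.single h b) = a * b * ψ (ρ (g⁻¹ * h) v) := by
  simp [orbitForm, mul_assoc]

variable {v ψ}

theorem orbitForm_isSymm (hψ : ∀ g, ψ (ρ g⁻¹ v) = ψ (ρ g v)) : (orbitForm ρ v ψ).IsSymm := by
  rw [LinearMap.BilinForm.isSymm_iff_flip]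
  ext g h
  simpa [orbitForm_single_single] using hψ (g⁻¹ * h)

theorem orbitForm_self [CharP k 2] (hψ : ∀ g, ψ (ρ g⁻¹ v) = ψ (ρ g v)) (a : G →₀ k) :
    orbitForm ρ v ψ a a = (Finsupp.linearCombination k (fun _ ↦ (1 : k)) a) ^ 2 * ψ v := by
  induction a using Finsupp.induction_linear with
  | zero => simp
  | add a b ha hb =>
    have hab := (orbitForm_isSymm ρ hψ).eq a b
    simp only [map_add, LinearMap.add_apply, CharTwo.add_sq, ha, hb, hab]
    linear_combination orbitForm ρ v ψ b a * CharTwo.two_eq_zero (R := k)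
  | single g c => simp [orbitForm_single_single, sq]

theorem exists_dual_apply_orbit_eq_one [CharP k 2] [ρ.IsIrreducible]
    (hψ : ∀ g, ψ (ρ g⁻¹ v) = ψ (ρ g v)) (hψv : ψ v ≠ 0) : ∃ χ : Dual k V, ∀ g, χ (ρ g v) = 1 := by
  set orbitMap : (G →₀ k) →ₗ[k] V := Finsupp.linearCombination k fun g ↦ ρ g v with horbitMap
  set augmentation : (G →₀ k) →ₗ[k] k := Finsupp.linearCombination k fun _ ↦ (1 : k)
    with haugmentation
  have hv0 : v ≠ 0 := fun h ↦ hψv (by rw [h, map_zero])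
  have hrange : orbitMap.range = ⊤ := by
    rw [horbitMap, Finsupp.range_linearCombination, span_range_apply_eq_top ρ hv0]
  have hker (a : G →₀ k) (ha : orbitMap a = 0) : augmentation a = 0 := by
    have hself : orbitForm ρ v ψ a a = 0 := by
      simp only [orbitForm, Finsupp.linearCombination_apply k a, Finsupp.sum, LinearMap.sum_apply,
        LinearMap.smul_apply, LinearMap.comp_apply, ← horbitMap, ha, map_zero, smul_zero,
        Finset.sum_const_zero]
    simpa [orbitForm_self ρ hψ, hψv] using hself
  obtain ⟨s, hs⟩ := orbitMap.exists_rightInverse_of_surjective hrange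
  refine ⟨augmentation ∘ₗ s, fun g ↦ ?_⟩
  have hdiff := hker (s (ρ g v) - .single g 1) (by
    rw [map_sub, ← LinearMap.comp_apply, hs]; simp [horbitMap])
  simpa [haugmentation, sub_eq_zero] using hdiff

theorem isTrivial_of_symmetric_matrixCoefficient [CharP k 2] [ρ.IsIrreducible]
    (hψ : ∀ g, ψ (ρ g⁻¹ v) = ψ (ρ g v)) (hψv : ψ v ≠ 0) : ρ.IsTrivial := by
  have hv0 : v ≠ 0 := fun h ↦ hψv (by rw [h, map_zero])
  obtain ⟨χ, hχ⟩ := exists_dual_apply_orbit_eq_one ρ hψ hψv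
  have hinv (g : G) : χ ∘ₗ ρ g = χ := by
    refine LinearMap.ext_on (span_range_apply_eq_top ρ hv0) ?_
    rintro _ ⟨h, rfl⟩
    simp only [LinearMap.comp_apply, ← End.mul_apply, ← map_mul, hχ]
  refine ⟨fun g ↦ LinearMap.ext fun w ↦ sub_eq_zero.mp (by_contra fun hw ↦ ?_)⟩
  have htop : χ.ker = ⊤ := by
    refine eq_top_of_invariant_of_mem_of_ne_zero ρ (fun h u hu ↦ ?_) (v := ρ g w - w) ?_ hw
    · rwa [LinearMap.mem_ker, ← LinearMap.comp_apply, hinv]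
    · rw [LinearMap.mem_ker, map_sub, ← LinearMap.comp_apply, hinv, sub_self]
  have hχv : χ (ρ 1 v) = 0 := LinearMap.mem_ker.mp (htop ▸ Submodule.mem_top)
  exact one_ne_zero ((hχ 1).symm.trans hχv)

theorem eigenspace_one_eq_bot_of_inv_eq [CharP k 2] [ρ.IsIrreducible] (hρ : ¬ρ.IsTrivial) {x : G}
    (hn : (orderOf x : k) ≠ 0) (hinv : ∀ g, ∃ i : ℕ, g⁻¹ = x ^ i * g * x ^ i) :
    End.eigenspace (ρ x) 1 = ⊥ := by
  refine (Submodule.eq_bot_iff _).mpr fun v hv ↦ by_contra fun hv0 ↦ hρ ?_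
  obtain ⟨φ, hφ⟩ := Projective.exists_dual_eq_one k hv0
  have hfix (i : ℕ) : ρ (x ^ i) v = v := by
    rw [map_pow, End.pow_apply]
    exact Function.iterate_fixed (by simpa using hv) i
  have habsorb (i : ℕ) : eigenAverage ρ x 1 * ρ (x ^ i) = eigenAverage ρ x 1 := by
    simpa [map_pow] using eigenAverage_mul_smul_map_pow ρ (θ := 1) (one_pow _) i
  refine isTrivial_of_symmetric_matrixCoefficient ρ (v := v) (ψ := φ ∘ₗ eigenAverage ρ x 1)
    (fun g ↦ ?_) ?_
  · obtain ⟨i, hi⟩ := hinv g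
    simp only [hi, map_mul, End.mul_apply, hfix, LinearMap.comp_apply]
    rw [← End.mul_apply, habsorb]
  · simpa [eigenAverage_apply_of_mem_eigenspace ρ hv, hφ] using hn

end SymmetricMatrixCoefficient

section SpecialLinearGroup

variable {R : Type*} [CommRing R]

theorem mul_self_eq_one_of_trace_eq_zero [CharP R 2] {g : SL(2, R)}
    (hg : g.val.trace = 0) : g * g = 1 := by
  have := CharP.nontrivial_of_char_ne_one (R := R) (v := 2) (by norm_num)
  have hCH := aeval_self_charpoly g.val
  simp only [charpoly_fin_two, hg, Matrix.SpecialLinearGroup.det_coe, map_zero, zero_mul, sub_zero,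
    map_one, map_add, map_pow, Polynomial.aeval_X] at hCH
  refine Subtype.ext ?_
  rwa [sq, CharTwo.add_eq_zero] at hCH

theorem isRoot_charpoly_iff [Nontrivial R] {x : SL(2, R)} {r : R} :
    x.val.charpoly.IsRoot r ↔ r ^ 2 - x.val.trace * r + 1 = 0 := by
  simp only [charpoly_fin_two, Polynomial.IsRoot, Polynomial.eval_add, Polynomial.eval_sub,
    Polynomial.eval_mul, Polynomial.eval_pow, Polynomial.eval_C, Polynomial.eval_X,
    Matrix.SpecialLinearGroup.det_coe]

theorem lower_left_ne_zero_of_forall_not_isRoot_charpoly [Nontrivial R] {x : SL(2, R)}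
    (hroot : ∀ r, ¬x.val.charpoly.IsRoot r) : x 1 0 ≠ 0 := fun h10 ↦ hroot (x 0 0) <| by
  have hdet := x.det_coe
  rw [det_fin_two] at hdet
  rw [isRoot_charpoly_iff, trace_fin_two]
  linear_combination -hdet - x 0 1 * h10

theorem det_smul_one_add_smul (x : SL(2, R)) (a b : R) :
    (a • 1 + b • x.val).det = a ^ 2 + a * b * x.val.trace + b ^ 2 := by
  have hdet := x.det_coe
  rw [det_fin_two] at hdet
  simp only [det_fin_two, trace_fin_two, Matrix.add_apply, Matrix.smul_apply, one_apply_eq,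
    smul_eq_mul, one_apply_ne zero_ne_one, one_apply_ne one_ne_zero]
  linear_combination b ^ 2 * hdet

theorem eq_one_of_commute_of_lower_left_eq_zero [IsDomain R] [CharP R 2] {x d : SL(2, R)}
    (hx : x 1 0 ≠ 0) (hd : Commute d x) (hd0 : d 1 0 = 0) : d = 1 := by
  have hdet := d.det_coe
  have hmul : d.val * x.val = x.val * d.val := congrArg Subtype.val hd.eq
  rw [det_fin_two, hd0, mul_zero, sub_zero] at hdet
  have h10 := congrFun₂ hmul 1 0
  have h00 := congrFun₂ hmul 0 0
  simp only [mul_apply, Fin.sum_univ_two, hd0] at h10 h00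
  have hdiag : d 1 1 = d 0 0 := mul_right_cancel₀ hx (by linear_combination h10)
  have h01 : d 0 1 = 0 := (mul_eq_zero_iff_right hx).mp (by linear_combination h00)
  have hone : d 0 0 = 1 := CharTwo.sq_inj.mp (by rw [one_pow, sq]; exact hdiag ▸ hdet)
  ext i j
  fin_cases i <;> fin_cases j <;> simp [hd0, h01, hdiag, hone]

variable {F : Type*} [Field F] [CharP F 2]

section Fintype

variable [Fintype F]

theorem pow_eq_one_of_isRoot_charpoly {x : SL(2, F)} {r : F} (hr : x.val.charpoly.IsRoot r) :
    x ^ ((Fintype.card F - 1) * 2) = 1 := by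
  set s := x.val.trace - r
  have hrs : r * s = 1 := by linear_combination -isRoot_charpoly_iff.mp hr
  have hfactor : x.val.charpoly =
      (Polynomial.X - Polynomial.C r) * (Polynomial.X - Polynomial.C s) := by
    have htr : x.val.trace = r + s := (add_sub_cancel _ _).symm
    rw [charpoly_fin_two, htr, Matrix.SpecialLinearGroup.det_coe, ← hrs]
    simp only [map_add, map_mul]
    ring
  have hdvd {u : F} (hu : u ≠ 0) :
      Polynomial.X - Polynomial.C u ∣ Polynomial.X ^ (Fintype.card F - 1) + 1 :=
    Polynomial.dvd_iff_isRoot.mpr (by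
      simp [FiniteField.pow_card_sub_one_eq_one u hu, CharTwo.add_self_eq_zero])
  have hcharpoly : x.val.charpoly ∣ Polynomial.X ^ ((Fintype.card F - 1) * 2) + 1 := by
    rw [hfactor, pow_mul, ← one_pow (M := Polynomial F) 2, ← CharTwo.add_sq, sq]
    exact mul_dvd_mul (hdvd (left_ne_zero_of_mul_eq_one hrs))
      (hdvd (right_ne_zero_of_mul_eq_one hrs))
  have haeval := Polynomial.aeval_eq_zero_of_dvd_aeval_eq_zero hcharpoly (aeval_self_charpoly x.val)
  simp only [map_add, map_pow, Polynomial.aeval_X, map_one] at haeval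
  exact Subtype.ext (CharTwo.add_eq_zero.mp haeval)

variable (F) in
theorem odd_card_add_one_of_charP_two : Odd (Fintype.card F + 1) :=
  (Nat.even_iff.mpr (FiniteField.even_card_of_char_two (ringChar.eq F 2))).add_one

theorem not_isRoot_charpoly_of_orderOf_eq {x : SL(2, F)}
    (hx : orderOf x = Fintype.card F + 1) (r : F) : ¬x.val.charpoly.IsRoot r := by
  intro hr
  have hcard := Fintype.one_lt_card (α := F)
  have hdvd : Fintype.card F + 1 ∣ (Fintype.card F - 1) * 2 :=
    hx ▸ orderOf_dvd_of_pow_eq_one (pow_eq_one_of_isRoot_charpoly hr)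
  have hdvd_four : Fintype.card F + 1 ∣ 2 ^ 2 :=
    (Nat.dvd_add_right hdvd).mp ⟨2, by omega⟩
  have hcoprime : (Fintype.card F + 1).Coprime (2 ^ 2) :=
    (Nat.coprime_two_right.mpr (odd_card_add_one_of_charP_two F)).pow_right 2
  have := Nat.eq_one_of_dvd_coprimes hcoprime dvd_rfl hdvd_four
  omega

theorem centralizer_eq_zpowers_of_orderOf_eq {x : SL(2, F)}
    (hx : orderOf x = Fintype.card F + 1) :
    Subgroup.centralizer {x} = Subgroup.zpowers x := by
  have hx10 : x 1 0 ≠ 0 := lower_left_ne_zero_of_forall_not_isRoot_charpoly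
    (not_isRoot_charpoly_of_orderOf_eq hx)
  let p : ℙ F (Fin 2 → F) := .mk F (Pi.single 0 1) (by simp)
  have hinj : Function.Injective fun c : Subgroup.centralizer {x} ↦ c.val • p := by
    intro c c' hcc'
    have hd : (c'⁻¹ * c : Subgroup.centralizer {x}).val • p = p := by
      rw [Subgroup.coe_mul, mul_smul, Subgroup.coe_inv, inv_smul_eq_iff]; exact hcc'
    have hd0 : (c'⁻¹ * c : Subgroup.centralizer {x}).val 1 0 = 0 := by
      rw [Projectivization.smul_mk, Projectivization.mk_eq_mk_iff'] at hd
      obtain ⟨a, ha⟩ := hd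
      have := congrFun ha 1
      simpa [Matrix.SpecialLinearGroup.smul_def] using this.symm
    have hcomm := Subgroup.mem_centralizer_singleton_iff.mp (c'⁻¹ * c).2
    exact (inv_mul_eq_one.mp (Subtype.ext
      (eq_one_of_commute_of_lower_left_eq_zero hx10 hcomm hd0))).symm
  refine (Subgroup.eq_of_le_of_card_ge (Subgroup.zpowers_le.mpr ?_) ?_).symm
  · exact Subgroup.mem_centralizer_singleton_iff.mpr rfl
  · calc Nat.card (Subgroup.centralizer {x}) ≤ Nat.card (ℙ F (Fin 2 → F)) :=
        Nat.card_le_card_of_injective _ hinj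
      _ = Nat.card (Subgroup.zpowers x) := by
        rw [Projectivization.card_of_finrank_two F _ (finrank_fin_fun F), Nat.card_zpowers, hx,
          Nat.card_eq_fintype_card]

end Fintype

theorem exists_mem_centralizer_coe_eq_smul [Finite F] {x : SL(2, F)}
    (hroot : ∀ r, ¬x.val.charpoly.IsRoot r) {a b : F} (hab : a ≠ 0 ∨ b ≠ 0) :
    ∃ c ∈ Subgroup.centralizer {x}, ∃ r : F, c.val = r • (a • 1 + b • x.val) := by
  set m := a • 1 + b • x.val with hm
  have hdet : m.det ≠ 0 := by
    intro h0
    rw [hm, det_smul_one_add_smul] at h0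
    rcases eq_or_ne b 0 with rfl | hb
    · simp_all
    · refine hroot (-a / b) (isRoot_charpoly_iff.mpr ?_)
      field_simp
      linear_combination h0
  obtain ⟨s, hs⟩ := isSquare_of_charTwo' m.det
  have hs0 : s ≠ 0 := fun h ↦ hdet (by rw [hs, h, mul_zero])
  refine ⟨⟨s⁻¹ • m, ?_⟩, Subgroup.mem_centralizer_singleton_iff.mpr (Subtype.ext ?_), s⁻¹, rfl⟩
  · rw [det_smul, Fintype.card_fin, hs]
    field_simp
  · change (s⁻¹ • m) * x.val = x.val * (s⁻¹ • m)
    simp [hm, mul_add, add_mul]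

theorem exists_mem_centralizer_trace_mul_eq_zero [Finite F] {x : SL(2, F)}
    (hroot : ∀ r, ¬x.val.charpoly.IsRoot r) (g : SL(2, F)) :
    ∃ c ∈ Subgroup.centralizer {x}, (g * c).val.trace = 0 := by
  obtain ⟨a, b, hab, htr⟩ : ∃ a b : F, (a ≠ 0 ∨ b ≠ 0) ∧
      a * g.val.trace + b * (g.val * x.val).trace = 0 := by
    by_cases hg : g.val.trace = 0
    · exact ⟨1, 0, .inl one_ne_zero, by rw [hg]; ring⟩
    · exact ⟨(g.val * x.val).trace, -g.val.trace, .inr (neg_ne_zero.mpr hg), by ring⟩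
  obtain ⟨c, hc, r, hcr⟩ := exists_mem_centralizer_coe_eq_smul hroot hab
  refine ⟨c, hc, ?_⟩
  calc (g * c).val.trace = (g.val * (r • (a • 1 + b • x.val))).trace := by rw [← hcr]; rfl
    _ = r * (a * g.val.trace + b * (g.val * x.val).trace) := by simp [mul_add]
    _ = 0 := by rw [htr, mul_zero]

theorem exists_mul_self_eq_one_conj_eq_inv {x : SL(2, F)} (hx : x 1 0 ≠ 0) :
    ∃ h : SL(2, F), h * h = 1 ∧ h * x * h⁻¹ = x⁻¹ := by
  let h : SL(2, F) := ⟨!![1, x.val.trace / x 1 0; 0, 1], by simp⟩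
  have hh : h * h = 1 := mul_self_eq_one_of_trace_eq_zero <| by
    simp [h, trace_fin_two, CharTwo.add_self_eq_zero]
  have hhx : (h * x) * (h * x) = 1 := mul_self_eq_one_of_trace_eq_zero <| by
    rw [Matrix.SpecialLinearGroup.coe_mul, trace_fin_two, mul_apply, mul_apply]
    simp only [h, Fin.sum_univ_two, of_apply, cons_val_zero, cons_val_one, cons_val_fin_one,
      one_mul, zero_mul, zero_add, div_mul_cancel₀ _ hx, trace_fin_two]
    linear_combination (x 0 0 + x 1 1) * CharTwo.two_eq_zero (R := F)
  refine ⟨h, hh, ?_⟩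
  rw [← mul_eq_one_iff_eq_inv, inv_eq_of_mul_eq_one_left hh, mul_assoc]
  exact hhx

theorem exists_inv_eq_pow_mul_mul_pow [Fintype F] {x : SL(2, F)}
    (hx : orderOf x = Fintype.card F + 1) (g : SL(2, F)) : ∃ i : ℕ, g⁻¹ = x ^ i * g * x ^ i := by
  obtain ⟨c, hc, htr⟩ :=
    exists_mem_centralizer_trace_mul_eq_zero (not_isRoot_charpoly_of_orderOf_eq hx) g
  rw [centralizer_eq_zpowers_of_orderOf_eq hx, ← mem_powers_iff_mem_zpowers] at hc
  obtain ⟨i, rfl⟩ := hc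
  refine ⟨i, inv_eq_of_mul_eq_one_right ?_⟩
  simpa only [mul_assoc] using mul_self_eq_one_of_trace_eq_zero htr

end SpecialLinearGroup

theorem exists_antiautomorphism_of_inv_eq {G : Type*} [Group G] {x h : G}
    (hinv : ∀ g, ∃ i : ℕ, g⁻¹ = x ^ i * g * x ^ i) (hh : h * h = 1) (hx : h * x * h⁻¹ = x⁻¹) :
    ∃ σ : G →* Gᵐᵒᵖ, σ x = .op x ∧ ∀ g, ∃ i : ℕ, SemiconjBy (x ^ i) (σ g).unop g := by
  refine ⟨(MulEquiv.inv' G).toMonoidHom.comp (MulAut.conj h).toMonoidHom, ?_, fun g ↦ ?_⟩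
  · simp [hx]
  · obtain ⟨i, hi⟩ := hinv (h * g)
    refine ⟨i, ?_⟩
    have hxi : h * x ^ i * h⁻¹ = (x ^ i)⁻¹ := by rw [← conj_pow, hx, inv_pow]
    have hh' : h⁻¹ = h := inv_eq_of_mul_eq_one_left hh
    rw [hh'] at hxi
    calc x ^ i * (h * g * h⁻¹)⁻¹ = x ^ i * (h * (h * g)⁻¹) := by group
      _ = x ^ i * (h * x ^ i * h) * g * x ^ i := by rw [hi]; simp only [mul_assoc]
      _ = g * x ^ i := by rw [hxi, mul_inv_cancel, one_mul]

theorem stmt_8_general (F : Type*) [Field F] [Fintype F] [CharP F 2]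
    (x : SL(2, F)) (hx : orderOf x = Fintype.card F + 1)
    (k : Type*) [Field k] [IsAlgClosed k] [CharP k 2]
    (V : Type*) [AddCommGroup V] [Module k V] [FiniteDimensional k V]
    (ρ : Representation k SL(2, F) V)
    (hirr : ∀ W : Submodule k V, (∀ g, ∀ v ∈ W, ρ g v ∈ W) → W = ⊥ ∨ W = ⊤)
    (hnt : ∃ g v, ρ g v ≠ v) :
    (∀ θ, finrank k (End.eigenspace (ρ x) θ) ≤ 1) ∧ End.eigenspace (ρ x) 1 = ⊥ := by
  have : Nontrivial V := let ⟨g, v, hgv⟩ := hnt; ⟨ρ g v, v, hgv⟩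
  have : ρ.IsIrreducible := isIrreducible_of_forall_invariant_submodule ρ hirr
  have hρ : ¬ρ.IsTrivial := fun _ ↦ let ⟨g, v, hgv⟩ := hnt; hgv (ρ.isTrivial_apply g v)
  have hn : (orderOf x : k) ≠ 0 := by
    rw [hx, natCast_eq_one_of_odd_of_two_eq_zero (odd_card_add_one_of_charP_two F)
      CharTwo.two_eq_zero]
    exact one_ne_zero
  have hinv := exists_inv_eq_pow_mul_mul_pow hx
  obtain ⟨h, hh, hhx⟩ := exists_mul_self_eq_one_conj_eq_inv
    (lower_left_ne_zero_of_forall_not_isRoot_charpoly (not_isRoot_charpoly_of_orderOf_eq hx))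
  obtain ⟨σ, hσx, hσ⟩ := exists_antiautomorphism_of_inv_eq hinv hh hhx
  exact ⟨finrank_eigenspace_le_one_of_antiautomorphism ρ hn σ hσx hσ,
    eigenspace_one_eq_bot_of_inv_eq ρ hρ hn hinv⟩

/-- Let `G = SL₂(q)` with `q > 3` even and `x ∈ G` of order `q + 1`. If `k` is
algebraically closed of characteristic `2` and `V` a nontrivial irreducible
`kG`-module, then `x` has pairwise distinct eigenvalues on `V`; in particular
its fixed space `C_V(x)` is zero. -/
theorem stmt_8 (F : Type*) [Field F] [Fintype F] [CharP F 2]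
    (hq : 3 < Fintype.card F)
    (x : Matrix.SpecialLinearGroup (Fin 2) F)
    (hx : orderOf x = Fintype.card F + 1)
    (k : Type*) [Field k] [IsAlgClosed k] [CharP k 2]
    (V : Type*) [AddCommGroup V] [Module k V] [FiniteDimensional k V]
    (ρ : Representation k (Matrix.SpecialLinearGroup (Fin 2) F) V)
    (hirr : ∀ W : Submodule k V,
      (∀ g : Matrix.SpecialLinearGroup (Fin 2) F, ∀ v ∈ W, ρ g v ∈ W) → W = ⊥ ∨ W = ⊤)
    (hnt : ∃ (g : Matrix.SpecialLinearGroup (Fin 2) F) (v : V), ρ g v ≠ v) :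
    (∀ θ : k, Module.finrank k (Module.End.eigenspace (ρ x) θ) ≤ 1) ∧
      Module.End.eigenspace (ρ x) 1 = ⊥ :=
  stmt_8_general F x hx k V ρ hirr hnt
end
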